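/- Suppose the digraph is acyclic, all edge weights are positive, the digraph has a globally reachable vertex, and the first n−1 edges form a rooted in-branching with root the vertex indexed n−1. Let k be any edge index and let δ ∈ ℝ satisfy |δ| < Σ_{e : tail e = tail k} w e (the sum of the nominal weights of all edges sharing the tail of edge k, i.e., the out-degree weight sum of its parent node). Let W_δ be the m×m diagonal matrix equal to W except that its (k,k) entry is w k + δ. Then every eigenvalue λ ∈ ℂ of the perturbed reduced edge Laplacian Eτᵀ * A * W_δ * Rᵀ (viewed as a complex matrix) has strictly positive real part. -/

import Mathlib

open Matrix

/-!
Let `L = A * W * Eᵀ` be the out-Laplacian. Since `E = Eτ * R`, it equals `(A * W * Rᵀ) * Eτᵀ`, while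
the reduced edge Laplacian `M` is the product `Eτᵀ * (A * W * Rᵀ)` of the same two factors in the
other order. Hence `charpoly L = X * charpoly M`, because `Eτ` has one more row than it has
columns. Acyclicity makes `L` triangular in a topological order of the vertices, with the weighted
out-degrees on the diagonal. The root is a sink and accounts for the factor `X`, so the eigenvalues
of `M` are exactly the out-degrees of the other vertices. Changing one weight by `δ` changes only
one out-degree, namely by `δ`.
-/

section Triangular

variable {V K : Type*} [Fintype V] [DecidableEq V] [CommRing K] {r : V → V → Prop}
  {M : Matrix V V K}

theorem det_eq_prod_diag_of_wellFounded (hr : WellFounded r)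
    (hM : ∀ i j, i ≠ j → M i j ≠ 0 → r i j) : M.det = ∏ i, M i i := by
  rw [det_apply, Finset.sum_eq_single 1 _ (by simp)]
  · simp
  intro σ _ hσ
  -- An `r`-minimal point `i` moved by `σ` is not `r`-above the moved point `σ i`: `M (σ i) i = 0`.
  obtain ⟨i, hi, hmin⟩ := hr.has_min {i | σ i ≠ i} (by
    contrapose! hσ
    exact Equiv.ext fun i => by_contra fun hi => Set.eq_empty_iff_forall_notMem.1 hσ i hi)
  have hentry : M (σ i) i = 0 := by
    by_contra hne
    exact hmin (σ i) (fun h => hi (σ.injective h)) (hM _ _ hi hne)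
  exact smul_eq_zero_of_right _ (Finset.prod_eq_zero (Finset.mem_univ i) hentry)

theorem charpoly_eq_prod_diag_of_wellFounded (hr : WellFounded r)
    (hM : ∀ i j, i ≠ j → M i j ≠ 0 → r i j) :
    M.charpoly = ∏ i, (Polynomial.X - Polynomial.C (M i i)) := by
  rw [charpoly, det_eq_prod_diag_of_wellFounded hr]
  · simp only [charmatrix_apply_eq]
  · intro i j hij hne
    refine hM i j hij fun h => hne ?_
    rw [charmatrix_apply_ne M i j hij, h, map_zero, neg_zero]

end Triangular

theorem wellFounded_of_forall_not_transGen_self {α : Type*} [Finite α] {r : α → α → Prop}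
    (hr : ∀ a, ¬ Relation.TransGen r a a) : WellFounded r := by
  have : Std.Irrefl (Relation.TransGen r) := ⟨hr⟩
  exact (Finite.wellFounded_of_trans_of_irrefl (Relation.TransGen r)).mono
    fun _ _ => Relation.TransGen.single

section Digraph

/-- The step relation of the digraph with edge endpoints `tail` and `head`. -/
def EdgeStep {V ε : Type*} (tail head : ε → V) (a b : V) : Prop :=
  ∃ e, tail e = a ∧ head e = b

/-- The out-incidence matrix of a digraph, in which only the tails of the edges matter. -/
def outIncMatrix {V ε : Type*} [DecidableEq V] (K : Type*) [Zero K] [One K] (tail : ε → V) :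
    Matrix V ε K :=
  of fun v e => if v = tail e then 1 else 0

/-- The incidence matrix of a digraph, with `1` at the tail and `-1` at the head of each edge. The
column of a loop is zero. -/
def incMatrix {V ε : Type*} [DecidableEq V] (K : Type*) [Ring K] (tail head : ε → V) :
    Matrix V ε K :=
  outIncMatrix K tail - outIncMatrix K head

/-- The weighted out-degree of a vertex. -/
def outDegree {V ε K : Type*} [DecidableEq V] [Fintype ε] [AddCommMonoid K] (tail : ε → V)
    (w : ε → K) (v : V) : K :=
  ∑ e with tail e = v, w e

/-- The out-Laplacian `A * W * Eᵀ` of a weighted digraph. -/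
def outLaplacian {V ε K : Type*} [DecidableEq V] [Fintype ε] [DecidableEq ε] [Ring K]
    (tail head : ε → V) (w : ε → K) : Matrix V V K :=
  outIncMatrix K tail * diagonal w * (incMatrix K tail head)ᵀ

/-- The reduced edge Laplacian `Bᵀ * A * W * Rᵀ` of a weighted digraph whose incidence matrix
factors as `B * R`; `B` is meant to be the incidence matrix of a spanning tree. -/
def reducedEdgeLaplacian {V ε T K : Type*} [DecidableEq V] [Fintype V] [Fintype ε] [DecidableEq ε]
    [Semiring K] (tail : ε → V) (w : ε → K) (B : Matrix V T K) (R : Matrix T ε K) :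
    Matrix T T K :=
  Bᵀ * outIncMatrix K tail * diagonal w * Rᵀ

variable {V ε : Type*} [DecidableEq V]

theorem eq_incMatrix {K : Type*} [Ring K] {tail head : ε → V} (hth : ∀ e, tail e ≠ head e)
    {E : Matrix V ε K}
    (hE : ∀ v e, E v e = if v = tail e then 1 else if v = head e then -1 else 0) :
    E = incMatrix K tail head := by
  ext v e
  rw [hE, incMatrix, Matrix.sub_apply, outIncMatrix, outIncMatrix, of_apply, of_apply]
  by_cases htail : v = tail e
  · simp [htail, hth e]
  · simp [htail, neg_ite]

theorem incMatrix_col {K : Type*} [Ring K] (tail head : ε → V) (e : ε) :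
    (incMatrix K tail head).col e = Pi.single (tail e) 1 - Pi.single (head e) 1 := by
  ext v
  simp [incMatrix, outIncMatrix, Pi.single_apply]

section OutDegree

variable [Fintype ε] {tail : ε → V}

theorem outDegree_eq_zero {K : Type*} [AddCommMonoid K] {v : V} (hv : ∀ e, tail e ≠ v)
    (w : ε → K) : outDegree tail w v = 0 :=
  Finset.sum_eq_zero fun e he => absurd (Finset.mem_filter.1 he).2 (hv e)

theorem outDegree_pos {K : Type*} [AddCommMonoid K] [PartialOrder K] [IsOrderedCancelAddMonoid K]
    {w : ε → K} (hw : ∀ e, 0 < w e) {v : V} (hv : ∃ e, tail e = v) : 0 < outDegree tail w v :=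
  Finset.sum_pos (fun e _ => hw e) (hv.imp fun e he => by simp [he])

theorem outDegree_update_add {K : Type*} [AddCommMonoid K] [DecidableEq ε] (w : ε → K) (k : ε)
    (δ : K) (v : V) :
    outDegree tail (Function.update w k (w k + δ)) v =
      outDegree tail w v + if tail k = v then δ else 0 := by
  have hsplit : Function.update w k (w k + δ) = w + Pi.single k δ := by
    ext e
    by_cases he : e = k
    · subst he; simp
    · simp [he]
  simp [outDegree, hsplit, Finset.sum_add_distrib]

theorem outDegree_update_add_pos {K : Type*} [AddCommGroup K] [PartialOrder K]
    [IsOrderedAddMonoid K] [DecidableEq ε] {w : ε → K} {k : ε} {δ : K}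
    (hδ : -outDegree tail w (tail k) < δ) {v : V} (hv : 0 < outDegree tail w v) :
    0 < outDegree tail (Function.update w k (w k + δ)) v := by
  rw [outDegree_update_add]
  split_ifs with hk
  · subst hk
    exact neg_lt_iff_pos_add'.1 hδ
  · rwa [add_zero]

end OutDegree

section Laplacian

variable [Fintype ε] [DecidableEq ε] {tail head : ε → V}

section Entries

variable {K : Type*} [Ring K]

theorem outLaplacian_apply (w : ε → K) (v u : V) :
    outLaplacian tail head w v u =
      ∑ e with tail e = v, w e * (incMatrix K tail head) u e := by
  simp [outLaplacian, mul_apply (N := (incMatrix K tail head)ᵀ), outIncMatrix,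
    Finset.sum_filter, eq_comm]

theorem outLaplacian_apply_self (hloop : ∀ e, tail e ≠ head e) (w : ε → K) (v : V) :
    outLaplacian tail head w v v = outDegree tail w v := by
  rw [outLaplacian_apply, outDegree]
  refine Finset.sum_congr rfl fun e he => ?_
  obtain rfl := (Finset.mem_filter.1 he).2
  simp [incMatrix, outIncMatrix, hloop e]

theorem edgeStep_of_outLaplacian_ne_zero {w : ε → K} {v u : V} (hvu : v ≠ u)
    (hne : outLaplacian tail head w v u ≠ 0) : EdgeStep tail head v u := by
  rw [outLaplacian_apply] at hne
  obtain ⟨e, he, hterm⟩ := Finset.exists_ne_zero_of_sum_ne_zero hne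
  obtain rfl := (Finset.mem_filter.1 he).2
  refine ⟨e, rfl, by_contra fun hhead => hterm ?_⟩
  simp [incMatrix, outIncMatrix, hvu.symm, Ne.symm hhead]

end Entries

variable {K : Type*} [CommRing K] [Fintype V]
  (hacyclic : ∀ v, ¬ Relation.TransGen (EdgeStep tail head) v v)

include hacyclic

theorem charpoly_outLaplacian (w : ε → K) :
    (outLaplacian tail head w).charpoly =
      ∏ v, (Polynomial.X - Polynomial.C (outDegree tail w v)) := by
  have hloop (e : ε) : tail e ≠ head e := fun he =>
    hacyclic (tail e) (.single ⟨e, rfl, he.symm⟩)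
  rw [charpoly_eq_prod_diag_of_wellFounded (wellFounded_of_forall_not_transGen_self hacyclic)
    fun v u => edgeStep_of_outLaplacian_ne_zero]
  simp only [outLaplacian_apply_self hloop]

variable {T : Type*} [Fintype T] [DecidableEq T] (hcard : Fintype.card T + 1 = Fintype.card V)
  {root : V} (hroot : ∀ e, tail e ≠ root) {B : Matrix V T K} {R : Matrix T ε K}
  (hBR : B * R = incMatrix K tail head)

include hcard hroot hBR

theorem charpoly_reducedEdgeLaplacian (w : ε → K) :
    (reducedEdgeLaplacian tail w B R).charpoly =
      ∏ v ∈ Finset.univ.erase root, (Polynomial.X - Polynomial.C (outDegree tail w v)) := by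
  set N := outIncMatrix K tail * diagonal w * Rᵀ with hN
  have hreduced : reducedEdgeLaplacian tail w B R = Bᵀ * N := by
    simp only [reducedEdgeLaplacian, hN, Matrix.mul_assoc]
  have hfull : outLaplacian tail head w = N * Bᵀ := by
    rw [outLaplacian, ← hBR, transpose_mul, hN, ← Matrix.mul_assoc]
  have hswap := charpoly_mul_comm_of_le N Bᵀ (by omega)
  rw [← hfull, charpoly_outLaplacian hacyclic, ← hcard, Nat.add_sub_cancel_left, pow_one,
    ← Finset.mul_prod_erase _ _ (Finset.mem_univ root), outDegree_eq_zero hroot, map_zero,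
    sub_zero] at hswap
  rw [hreduced]
  exact (Polynomial.isRegular_X.left hswap).symm

theorem exists_eq_outDegree_of_hasEigenvalue {L : Type*} [Field L] (f : K →+* L) {w : ε → K}
    {μ : L} (hμ : Module.End.HasEigenvalue
      (toLin' ((reducedEdgeLaplacian tail w B R).map f)) μ) :
    ∃ v ≠ root, μ = f (outDegree tail w v) := by
  rw [Module.End.hasEigenvalue_iff_isRoot_charpoly, charpoly_toLin', charpoly_map,
    charpoly_reducedEdgeLaplacian hacyclic hcard hroot hBR, Polynomial.IsRoot,
    Polynomial.eval_map, Polynomial.eval₂_finsetProd, Finset.prod_eq_zero_iff] at hμ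
  obtain ⟨v, hv, hzero⟩ := hμ
  refine ⟨v, Finset.ne_of_mem_erase hv, sub_eq_zero.1 ?_⟩
  simpa using hzero

end Laplacian

end Digraph

theorem inv_transpose_mul_self_mul_transpose_mul_self {V T K : Type*} [Fintype V] [Fintype T]
    [DecidableEq T] [Field K] [LinearOrder K] [IsStrictOrderedRing K] {B : Matrix V T K}
    (hB : Function.Injective B.mulVec) : (Bᵀ * B)⁻¹ * Bᵀ * B = 1 := by
  have hker : LinearMap.ker (Bᵀ * B).mulVecLin = ⊥ := by
    rw [ker_mulVecLin_transpose_mul_self]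
    exact LinearMap.ker_eq_bot.2 hB
  have hunit : IsUnit (Bᵀ * B) := mulVec_injective_iff_isUnit.1 (LinearMap.ker_eq_bot.1 hker)
  rw [Matrix.mul_assoc, nonsing_inv_mul _ ((isUnit_iff_isUnit_det _).1 hunit)]

theorem eq_leftInverse_mul_of_blocks {V K : Type*} [Fintype V] [Semiring K] {r m : ℕ} (hrm : r ≤ m)
    {E : Matrix V (Fin m) K} {P : Matrix (Fin r) V K}
    (hP : P * E.submatrix id (Fin.castLE hrm) = 1) {R : Matrix (Fin r) (Fin m) K}
    (hR : ∀ i j, R i j =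
      if h : j.val < r then (if i.val = j.val then 1 else 0)
      else (P * E.submatrix id (fun l : Fin (m - r) => ⟨r + l.val, by have := l.2; omega⟩)) i
        ⟨j.val - r, by have := j.2; omega⟩) :
    R = P * E := by
  ext i j
  rw [hR]
  by_cases hj : j.val < r
  · have hcol : (P * E) i j = (1 : Matrix (Fin r) (Fin r) K) i ⟨j, hj⟩ := congrFun₂ hP i ⟨j, hj⟩
    simp only [dif_pos hj, hcol, one_apply, Fin.ext_iff]
  · simp only [dif_neg hj, mul_apply, submatrix_apply, id, Nat.add_sub_cancel' (not_lt.1 hj)]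

/-- A rooted in-branching: every vertex other than `root` has exactly one outgoing edge, `root` has
none, and every vertex reaches `root`. That a non-root vertex has an outgoing edge is
`IsInBranching.exists_tail_eq`. -/
structure IsInBranching {V T : Type*} (tail head : T → V) (root : V) : Prop where
  tail_injective : Function.Injective tail
  tail_ne_root : ∀ i, tail i ≠ root
  reaches_root : ∀ v, Relation.ReflTransGen (EdgeStep tail head) v root

namespace IsInBranching

variable {V T : Type*} {tail head : T → V} {root : V}

theorem exists_tail_eq (h : IsInBranching tail head root) {v : V} (hv : v ≠ root) :
    ∃ i, tail i = v := by
  obtain rfl | ⟨_, ⟨i, hi, -⟩, -⟩ := (h.reaches_root v).cases_head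
  · exact absurd rfl hv
  · exact ⟨i, hi⟩

theorem tail_ne_root_of_acyclic {ε : Type*} {tail head : ε → V} {ι : T → ε}
    (h : IsInBranching (tail ∘ ι) (head ∘ ι) root)
    (hacyclic : ∀ v, ¬ Relation.TransGen (EdgeStep tail head) v v) (e : ε) : tail e ≠ root := by
  intro he
  refine hacyclic root (.head' ⟨e, he, rfl⟩ (.mono ?_ _ _ (h.reaches_root (head e))))
  rintro _ _ ⟨i, rfl, rfl⟩
  exact ⟨ι i, rfl, rfl⟩

theorem card_add_one [Fintype V] [Fintype T] (h : IsInBranching tail head root) :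
    Fintype.card T + 1 = Fintype.card V := by
  classical
  have himage : Finset.univ.image tail = Finset.univ.erase root := by
    ext v
    simp only [Finset.mem_image, Finset.mem_univ, true_and, Finset.mem_erase, and_true]
    exact ⟨fun ⟨i, hi⟩ => hi ▸ h.tail_ne_root i, h.exists_tail_eq⟩
  rw [← Finset.card_univ, ← Finset.card_image_of_injective _ h.tail_injective, himage,
    Finset.card_erase_add_one (Finset.mem_univ root), Finset.card_univ]

variable [DecidableEq V] [Fintype T]

theorem single_sub_single_root_mem_range (h : IsInBranching tail head root) (K : Type*)
    [CommRing K] (v : V) :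
    (Pi.single v 1 - Pi.single root 1 : V → K) ∈
      LinearMap.range (incMatrix K tail head).mulVecLin := by
  classical
  induction h.reaches_root v using Relation.ReflTransGen.head_induction_on with
  | refl => simp
  | head hstep _ ih =>
    obtain ⟨i, rfl, rfl⟩ := hstep
    have hcol : (incMatrix K tail head).mulVecLin (Pi.single i 1) =
        Pi.single (tail i) 1 - Pi.single (head i) 1 := by
      rw [mulVecLin_apply, mulVec_single_one, incMatrix_col]
    simpa only [hcol, sub_add_sub_cancel] using
      add_mem (LinearMap.mem_range_self _ (Pi.single i 1)) ih

theorem exists_mul_eq_incMatrix (h : IsInBranching tail head root) (K : Type*) [CommRing K]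
    {ε : Type*} (tail' head' : ε → V) :
    ∃ C : Matrix T ε K, incMatrix K tail head * C = incMatrix K tail' head' := by
  have hcol (e : ε) : ∃ c, incMatrix K tail head *ᵥ c = (incMatrix K tail' head').col e := by
    rw [incMatrix_col, ← sub_sub_sub_cancel_right _ _ (Pi.single root 1)]
    exact sub_mem (h.single_sub_single_root_mem_range K _)
      (h.single_sub_single_root_mem_range K _)
  choose C hC using hcol
  exact ⟨(of C)ᵀ, Matrix.ext fun v e => congrFun (hC e) v⟩

theorem mulVec_incMatrix_injective [Finite V] (h : IsInBranching tail head root) (K : Type*)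
    [Field K] : Function.Injective (incMatrix K tail head).mulVec := by
  classical
  cases nonempty_fintype V
  let φ : (T → K) × K →ₗ[K] V → K :=
    (incMatrix K tail head).mulVecLin.coprod (LinearMap.toSpanSingleton K _ (Pi.single root 1))
  have hφ : Function.Surjective φ := by
    rw [← LinearMap.range_eq_top, eq_top_iff, ← (Pi.basisFun K V).span_eq, Submodule.span_le]
    rintro _ ⟨v, rfl⟩
    obtain ⟨z, hz⟩ := h.single_sub_single_root_mem_range K v
    exact ⟨(z, 1), by simp [φ, hz, -mulVecLin_apply]⟩
  have hdim : Module.finrank K ((T → K) × K) = Module.finrank K (V → K) := by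
    simp [h.card_add_one]
  have hinj := (LinearMap.injective_iff_surjective_of_finrank_eq_finrank hdim).2 hφ
  intro a b hab
  exact (Prod.ext_iff.1 (hinj (a₁ := (a, 0)) (a₂ := (b, 0)) (by simpa [φ] using hab))).1

theorem incMatrix_mul_leftInverse_mul [Fintype V] [DecidableEq T]
    (h : IsInBranching tail head root) {K : Type*} [CommRing K] {P : Matrix T V K}
    (hP : P * incMatrix K tail head = 1) {ε : Type*} (tail' head' : ε → V) :
    incMatrix K tail head * (P * incMatrix K tail' head') = incMatrix K tail' head' := by
  obtain ⟨C, hC⟩ := h.exists_mul_eq_incMatrix K tail' head'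
  rw [← hC, ← Matrix.mul_assoc P, hP, Matrix.one_mul]

end IsInBranching

theorem perturbed_reduced_edgeLaplacian_robust_acyclic_general
    {V ε T : Type*} [Fintype V] [DecidableEq V] [Fintype ε] [DecidableEq ε] [Fintype T]
    [DecidableEq T] {tail head : ε → V}
    (hacyclic : ∀ v, ¬ Relation.TransGen (EdgeStep tail head) v v)
    {root : V} (hroot : ∀ e, tail e ≠ root) (hcard : Fintype.card T + 1 = Fintype.card V)
    {Eτ : Matrix V T ℝ} {R : Matrix T ε ℝ} (hR : Eτ * R = incMatrix ℝ tail head)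
    {w : ε → ℝ} (hw : ∀ v ≠ root, 0 < outDegree tail w v)
    {k : ε} {δ : ℝ} (hδ : -outDegree tail w (tail k) < δ) {μ : ℂ}
    (hμ : Module.End.HasEigenvalue (toLin' ((reducedEdgeLaplacian tail
      (Function.update w k (w k + δ)) Eτ R).map Complex.ofReal)) μ) :
    0 < μ.re := by
  obtain ⟨v, hv, rfl⟩ :=
    exists_eq_outDegree_of_hasEigenvalue hacyclic hcard hroot hR Complex.ofRealHom hμ
  exact outDegree_update_add_pos hδ (hw v hv)

/-- For an acyclic weighted digraph with positive weights, a globally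
reachable vertex, and whose first `n-1` edges form a rooted in-branching with root the
vertex `n-1`, if one edge weight `w k` is perturbed by `δ` with `|δ|` less than the sum
of the weights of all edges sharing the tail of `e_k`, then all complex eigenvalues of
the perturbed reduced edge Laplacian `Eτᵀ * A * W_δ * Rᵀ` have positive real part. -/
theorem perturbed_reduced_edgeLaplacian_robust_acyclic
    (n m : ℕ) (hn : 2 ≤ n) (hm : 1 ≤ m) (hmn : n - 1 ≤ m)
    (tail head : Fin m → Fin n) (hth : ∀ e, tail e ≠ head e)
    (w : Fin m → ℝ) (hw : ∀ e, 0 < w e)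
    (E : Matrix (Fin n) (Fin m) ℝ)
    (hE : ∀ v e, E v e = if v = tail e then 1 else if v = head e then -1 else 0)
    (A : Matrix (Fin n) (Fin m) ℝ)
    (hA : ∀ v e, A v e = if v = tail e then 1 else 0)
    (W : Matrix (Fin m) (Fin m) ℝ) (hW : W = Matrix.diagonal w)
    (hgr : ∃ v : Fin n, ∀ u : Fin n,
      Relation.ReflTransGen (fun a b => ∃ e, tail e = a ∧ head e = b) u v)
    (hacyclic : ∀ v : Fin n,
      ¬ Relation.TransGen (fun a b => ∃ e, tail e = a ∧ head e = b) v v)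
    (root : Fin n) (hroot : root = ⟨n - 1, by omega⟩)
    -- the first n-1 edges form a rooted in-branching with root `root`:
    (hinj : Function.Injective (fun i : Fin (n - 1) => tail ⟨i.val, lt_of_lt_of_le i.2 hmn⟩))
    (hnotroot : ∀ i : Fin (n - 1), tail ⟨i.val, lt_of_lt_of_le i.2 hmn⟩ ≠ root)
    (hsurj : ∀ v : Fin n, v ≠ root → ∃ i : Fin (n - 1), tail ⟨i.val, lt_of_lt_of_le i.2 hmn⟩ = v)
    (hreach : ∀ v : Fin n, Relation.ReflTransGen
      (fun a b => ∃ e : Fin m, e.val < n - 1 ∧ tail e = a ∧ head e = b) v root)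
    (Eτ : Matrix (Fin n) (Fin (n - 1)) ℝ)
    (hEτ : Eτ = E.submatrix id (fun i : Fin (n - 1) => ⟨i.val, lt_of_lt_of_le i.2 hmn⟩))
    (Ec : Matrix (Fin n) (Fin (m - (n - 1))) ℝ)
    (hEc : Ec = E.submatrix id
      (fun j : Fin (m - (n - 1)) => ⟨n - 1 + j.val, by have := j.2; omega⟩))
    (Tτ : Matrix (Fin (n - 1)) (Fin (m - (n - 1))) ℝ)
    (hTτ : Tτ = (Eτᵀ * Eτ)⁻¹ * Eτᵀ * Ec)
    (R : Matrix (Fin (n - 1)) (Fin m) ℝ)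
    (hR : ∀ (i : Fin (n - 1)) (j : Fin m), R i j =
      if h : j.val < n - 1 then (if i.val = j.val then 1 else 0)
      else Tτ i ⟨j.val - (n - 1), by have := j.2; omega⟩)
    (k : Fin m) (δ : ℝ)
    (hδ : |δ| < ∑ e ∈ Finset.univ.filter (fun e => tail e = tail k), w e)
    (Wδ : Matrix (Fin m) (Fin m) ℝ)
    (hWδ : Wδ = Matrix.diagonal (fun e => if e = k then w k + δ else w e)) :
    ∀ μ : ℂ, (∃ x : Fin (n - 1) → ℂ, x ≠ 0 ∧
        ((Eτᵀ * A * Wδ * Rᵀ).map Complex.ofReal).mulVec x = μ • x) →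
      0 < μ.re := by
  rintro μ ⟨x, hx0, hx⟩
  obtain rfl := eq_incMatrix hth hE
  obtain rfl : A = outIncMatrix ℝ tail := Matrix.ext hA
  obtain rfl : Wδ = diagonal (Function.update w k (w k + δ)) :=
    hWδ.trans (congrArg diagonal (funext fun e => (Function.update_apply w k _ e).symm))
  have hbranch : IsInBranching (tail ∘ Fin.castLE hmn) (head ∘ Fin.castLE hmn) root :=
    ⟨hinj, hnotroot, fun v => .mono (fun _ _ ⟨e, he, hstep⟩ => ⟨⟨e, he⟩, hstep⟩) _ _ (hreach v)⟩
  have hfactor : Eτ * R = incMatrix ℝ tail head := by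
    subst hTτ hEτ hEc
    have hleft := inv_transpose_mul_self_mul_transpose_mul_self
      (hbranch.mulVec_incMatrix_injective ℝ)
    rw [eq_leftInverse_mul_of_blocks hmn hleft hR]
    exact hbranch.incMatrix_mul_leftInverse_mul hleft tail head
  exact perturbed_reduced_edgeLaplacian_robust_acyclic_general hacyclic
    (hbranch.tail_ne_root_of_acyclic hacyclic) hbranch.card_add_one hfactor
    (fun v hv => outDegree_pos hw ((hbranch.exists_tail_eq hv).imp' _ fun _ => id))
    (abs_lt.1 hδ).1
    (Module.End.hasEigenvalue_of_hasEigenvector ⟨Module.End.mem_eigenspace_iff.2 hx, hx0⟩)
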